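/- Let G act on a set X, let V be a G-module, and let f : X^{n+1} → V be a G-equivariant n-cocycle. Then the cochains ψ^{p,q}(x⃗, x⃗') := (-1)^p f(x⃗, x⃗') (for p+q = n-1) are G-equivariant, and the element Σ_{p+q=n-1} ψ^{p,q} of the total complex of the equivariant double complex (A^{*,*})^G has total coboundary j^n(f) − i^n(f). Hence the two images of f in the total complex of equivariant cochains are cohomologous. -/

import Mathlib

/-!
Each face of the concatenation `(x⃗, x⃗')` omits an entry either of `x⃗` or of `x⃗'`, so `ASd f` at
`(x⃗, x⃗')` splits into a horizontal and a vertical part. With the signs of `ψ` this says that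
`ψ` is a cochain homotopy on arbitrary cochains: `D (ψ f) + ψ (d f) = j f - i f`, where `d = ASd`
and `D` is the total differential. In the two outer bidegrees the face emptying one of the tuples
has no counterpart in `D (ψ f)`, and it contributes `j f` and `-i f`.
-/

/-- The Alexander–Spanier differential. -/
def ASd {X V : Type*} [AddCommGroup V] (n : ℕ) (f : (Fin (n+1) → X) → V) :
    (Fin (n+2) → X) → V :=
  fun x => ∑ i : Fin (n+2), (-1 : ℤ) ^ (i : ℕ) • f (x ∘ i.succAbove)

/-- Horizontal differential of the double complex. -/
def dh {X V : Type*} [AddCommGroup V] (p q : ℕ)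
    (f : (Fin (p+1) → X) × (Fin (q+1) → X) → V) :
    (Fin (p+2) → X) × (Fin (q+1) → X) → V :=
  fun z => ∑ i : Fin (p+2), (-1 : ℤ) ^ (i : ℕ) • f (z.1 ∘ i.succAbove, z.2)

/-- Vertical differential of the double complex. -/
def dv {X V : Type*} [AddCommGroup V] (p q : ℕ)
    (f : (Fin (p+1) → X) × (Fin (q+1) → X) → V) :
    (Fin (p+1) → X) × (Fin (q+2) → X) → V :=
  fun z => (-1 : ℤ) ^ p • ∑ i : Fin (q+2), (-1 : ℤ) ^ (i : ℕ) • f (z.1, z.2 ∘ i.succAbove)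

/-- The diagonal `G`-action on bidegree `(p,q)` cochains. -/
def gactD {G X V : Type*} [Group G] [MulAction G X] [AddCommGroup V]
    [DistribMulAction G V] (g : G) (p q : ℕ)
    (f : (Fin (p+1) → X) × (Fin (q+1) → X) → V) :
    (Fin (p+1) → X) × (Fin (q+1) → X) → V :=
  fun z => g • f (fun i => g⁻¹ • z.1 i, fun i => g⁻¹ • z.2 i)

/-- `ψ^{p,q}(x⃗,x⃗') = (-1)^p f(x⃗,x⃗')` for `p + q = n - 1` (`n = m+1`). -/
def psi {X V : Type*} [AddCommGroup V] (m p q : ℕ) (hpq : p + q = m)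
    (f : (Fin (m+2) → X) → V) : (Fin (p+1) → X) × (Fin (q+1) → X) → V :=
  fun z => (-1 : ℤ) ^ p •
    f (fun i => Fin.append z.1 z.2 (Fin.cast (by omega) i))

/-- The concatenated tuple `(x⃗, x⃗')`, with `n = a + b` only propositionally: the lengths that
occur below, such as `(p + 1) + (q + 1)` and `p + q + 2`, are not definitionally equal. -/
def concat {X : Type*} {a b n : ℕ} (h : n = a + b) (x : Fin a → X) (y : Fin b → X) : Fin n → X :=
  fun i => Fin.append x y (Fin.cast h i)

section Concat

variable {X : Type*} {a b n : ℕ}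

theorem concat_apply (h : n = a + b) (x : Fin a → X) (y : Fin b → X) (i : Fin n) :
    concat h x y i =
      if hi : (i : ℕ) < a then x ⟨i, hi⟩ else y ⟨i - a, by omega⟩ := by
  subst h
  refine Fin.addCases (fun j => ?_) (fun j => ?_) i <;> simp [concat]

theorem concat_empty_left (h : n = 0 + n) (x : Fin 0 → X) (y : Fin n → X) :
    concat h x y = y := by
  ext i
  simp [concat_apply]

theorem concat_empty_right (h : n = n + 0) (x : Fin n → X) (y : Fin 0 → X) :
    concat h x y = x := by
  ext i
  simp [concat_apply]

theorem comp_concat {Y : Type*} (φ : X → Y) (h : n = a + b) (x : Fin a → X) (y : Fin b → X) :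
    φ ∘ concat h x y = concat h (φ ∘ x) (φ ∘ y) := by
  ext i
  simp only [Function.comp_apply, concat_apply, apply_dite φ]

theorem concat_comp_succAbove_castAdd (h : n + 1 = (a + 1) + b) (x : Fin (a + 1) → X)
    (y : Fin b → X) (i : Fin (a + 1)) :
    concat h x y ∘ (Fin.cast h.symm (Fin.castAdd b i)).succAbove =
      concat (by omega) (x ∘ i.succAbove) y := by
  ext k
  simp only [Function.comp_apply, concat_apply, Fin.succAbove, Fin.lt_def]
  grind

theorem concat_comp_succAbove_natAdd (h : n + 1 = a + (b + 1)) (x : Fin a → X)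
    (y : Fin (b + 1) → X) (j : Fin (b + 1)) :
    concat h x y ∘ (Fin.cast h.symm (Fin.natAdd a j)).succAbove =
      concat (by omega) x (y ∘ j.succAbove) := by
  ext k
  simp only [Function.comp_apply, concat_apply, Fin.succAbove, Fin.lt_def]
  grind

end Concat

section Homotopy

variable {X V : Type*} [AddCommGroup V] {m n p q : ℕ}

theorem ASd_concat (h : n + 2 = (p + 1) + (q + 1)) (f : (Fin (n + 1) → X) → V)
    (x : Fin (p + 1) → X) (y : Fin (q + 1) → X) :
    ASd n f (concat h x y) =
      ∑ i : Fin (p + 1), (-1 : ℤ) ^ (i : ℕ) • f (concat (by omega) (x ∘ i.succAbove) y) +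
      (-1 : ℤ) ^ (p + 1) •
        ∑ j : Fin (q + 1), (-1 : ℤ) ^ (j : ℕ) • f (concat (by omega) x (y ∘ j.succAbove)) := by
  rw [ASd, ← Equiv.sum_comp (finCongr h.symm), Fin.sum_univ_add, Finset.smul_sum]
  simp only [finCongr_apply, concat_comp_succAbove_castAdd, concat_comp_succAbove_natAdd,
    Fin.val_cast, Fin.val_castAdd, Fin.val_natAdd, pow_add, mul_smul]

theorem psi_zero (h : p + q = m) : psi m p q h (0 : (Fin (m + 2) → X) → V) = 0 := by
  ext z
  simp [psi]

theorem psi_ASd_apply (h : p + q = m + 1) (f : (Fin (m + 2) → X) → V)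
    (z : (Fin (p + 1) → X) × (Fin (q + 1) → X)) :
    psi (m + 1) p q h (ASd (m + 1) f) z =
      (-1 : ℤ) ^ p •
          ∑ i : Fin (p + 1), (-1 : ℤ) ^ (i : ℕ) • f (concat (by omega) (z.1 ∘ i.succAbove) z.2) -
        ∑ j : Fin (q + 1), (-1 : ℤ) ^ (j : ℕ) • f (concat (by omega) z.1 (z.2 ∘ j.succAbove)) := by
  have sign : (-1 : ℤ) ^ p * (-1) ^ (p + 1) = -1 := by
    rw [pow_succ, ← mul_assoc, pow_mul_pow_eq_one p (by norm_num), one_mul]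
  calc psi (m + 1) p q h (ASd (m + 1) f) z
      = (-1 : ℤ) ^ p • ASd (m + 1) f (concat (by omega) z.1 z.2) := rfl
    _ = _ := by
      rw [ASd_concat, smul_add, smul_smul ((-1 : ℤ) ^ p), sign, neg_one_smul, sub_eq_add_neg]

theorem dh_psi_apply (h : p + q = m) (f : (Fin (m + 2) → X) → V)
    (z : (Fin (p + 2) → X) × (Fin (q + 1) → X)) :
    dh p q (psi m p q h f) z =
      (-1 : ℤ) ^ p •
        ∑ i : Fin (p + 2), (-1 : ℤ) ^ (i : ℕ) • f (concat (by omega) (z.1 ∘ i.succAbove) z.2) := by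
  rw [Finset.smul_sum]
  exact Finset.sum_congr rfl fun i _ => smul_comm _ _ _

theorem dv_psi_apply (h : p + q = m) (f : (Fin (m + 2) → X) → V)
    (z : (Fin (p + 1) → X) × (Fin (q + 2) → X)) :
    dv p q (psi m p q h f) z =
      ∑ j : Fin (q + 2), (-1 : ℤ) ^ (j : ℕ) • f (concat (by omega) z.1 (z.2 ∘ j.succAbove)) := by
  rw [dv, Finset.smul_sum]
  refine Finset.sum_congr rfl fun j _ => ?_
  rw [psi, smul_comm, smul_smul ((-1 : ℤ) ^ p), pow_mul_pow_eq_one p (by norm_num), one_smul]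
  rfl

theorem dh_psi_add_dv_psi_add_psi_ASd (h : p + (q + 1) = m) (f : (Fin (m + 2) → X) → V) :
    dh p (q + 1) (psi m p (q + 1) h f) + dv (p + 1) q (psi m (p + 1) q (by omega) f) +
      psi (m + 1) (p + 1) (q + 1) (by omega) (ASd (m + 1) f) = 0 := by
  ext z
  simp only [Pi.add_apply, Pi.zero_apply, dh_psi_apply, dv_psi_apply, psi_ASd_apply, pow_succ,
    mul_neg_one, neg_smul]
  abel

theorem dv_psi_add_psi_ASd (f : (Fin (m + 2) → X) → V) :
    dv 0 m (psi m 0 m (zero_add m) f) + psi (m + 1) 0 (m + 1) (zero_add _) (ASd (m + 1) f) =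
      fun z => f z.2 := by
  ext z
  rw [Pi.add_apply, dv_psi_apply, psi_ASd_apply, Fin.sum_univ_one, concat_empty_left]
  simp only [Fin.val_zero, pow_zero, one_smul, add_sub_cancel]

theorem dh_psi_add_psi_ASd (f : (Fin (m + 2) → X) → V) :
    dh m 0 (psi m m 0 (add_zero m) f) + psi (m + 1) (m + 1) 0 (add_zero _) (ASd (m + 1) f) =
      fun z => -f z.1 := by
  ext z
  rw [Pi.add_apply, dh_psi_apply, psi_ASd_apply, Fin.sum_univ_one, concat_empty_right]
  simp only [Fin.val_zero, pow_zero, one_smul, pow_succ, mul_neg_one, neg_smul]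
  abel

end Homotopy

theorem smul_apply_inv_smul_eq {G X V ι : Type*} [Group G] [MulAction G X] [SMul G V]
    {f : (ι → X) → V} (heq : ∀ (g : G) (x : ι → X), f (fun i => g • x i) = g • f x) (g : G) :
    (fun x => g • f fun i => g⁻¹ • x i) = f := by
  ext x
  simp only [← heq, smul_inv_smul]

theorem gactD_psi {G X V : Type*} [Group G] [MulAction G X] [AddCommGroup V]
    [DistribMulAction G V] {m p q : ℕ} (g : G) (h : p + q = m) (f : (Fin (m + 2) → X) → V) :
    gactD g p q (psi m p q h f) = psi m p q h fun x => g • f fun i => g⁻¹ • x i := by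
  ext z
  have translate : concat (by omega) (fun i => g⁻¹ • z.1 i) (fun i => g⁻¹ • z.2 i) =
      fun i : Fin (m + 2) => g⁻¹ • concat (by omega) z.1 z.2 i :=
    (comp_concat (g⁻¹ • ·) _ z.1 z.2).symm
  calc gactD g p q (psi m p q h f) z
      = g • (-1 : ℤ) ^ p •
          f (concat (by omega) (fun i => g⁻¹ • z.1 i) (fun i => g⁻¹ • z.2 i)) := rfl
    _ = (-1 : ℤ) ^ p • g • f fun i => g⁻¹ • concat (by omega) z.1 z.2 i := by
      rw [translate, smul_comm]

theorem stmt6_general (G X V : Type*) [Group G] [MulAction G X] [AddCommGroup V]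
    [DistribMulAction G V] (m : ℕ) (f : (Fin (m + 2) → X) → V) :
    (∀ (g : G) p q (h : p + q = m),
        gactD g p q (psi m p q h f) = psi m p q h fun x => g • f fun i => g⁻¹ • x i) ∧
    (∀ p q (h : p + (q + 1) = m),
        dh p (q + 1) (psi m p (q + 1) h f)
          + dv (p + 1) q (psi m (p + 1) q (by omega) f)
          + psi (m + 1) (p + 1) (q + 1) (by omega) (ASd (m + 1) f) = 0) ∧
    (dv 0 m (psi m 0 m (zero_add m) f)
        + psi (m + 1) 0 (m + 1) (zero_add _) (ASd (m + 1) f) = fun z => f z.2) ∧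
    (dh m 0 (psi m m 0 (add_zero m) f)
        + psi (m + 1) (m + 1) 0 (add_zero _) (ASd (m + 1) f) = fun z => -f z.1) :=
  ⟨fun g _ _ h => gactD_psi g h f, fun _ _ h => dh_psi_add_dv_psi_add_psi_ASd h f,
    dv_psi_add_psi_ASd f, dh_psi_add_psi_ASd f⟩

/-- For a `G`-equivariant `n`-cocycle `f` (`n = m+1`), the cochains `ψ^{p,q}` are
`G`-equivariant and the total coboundary of `∑_{p+q=n-1} ψ^{p,q}` in the equivariant
total complex is `j^n(f) − i^n(f)`; hence the two images of `f` are cohomologous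
in the total complex of equivariant cochains. -/
theorem stmt6 (G X V : Type*) [Group G] [MulAction G X] [AddCommGroup V]
    [DistribMulAction G V] (m : ℕ) (f : (Fin (m+2) → X) → V)
    (heq : ∀ (g : G) (x : Fin (m+2) → X), f (fun i => g • x i) = g • f x)
    (hf : ASd (m+1) f = 0) :
    -- each ψ^{p,q} is G-equivariant
    (∀ (g : G) p q (h : p + q = m), gactD g p q (psi m p q h f) = psi m p q h f) ∧
    -- interior components of the total differential vanish
    (∀ p q (h : p + q + 1 = m),
        dh p (q+1) (psi m p (q+1) (by omega) f)
          + dv (p+1) q (psi m (p+1) q (by omega) f) = 0) ∧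
    -- component in bidegree (0, n) is j^n(f)
    (dv 0 m (psi m 0 m (by omega) f) = fun z => f z.2) ∧
    -- component in bidegree (n, 0) is -i^n(f)
    (dh m 0 (psi m m 0 (by omega) f) = fun z => - f z.1) := by
  simpa only [smul_apply_inv_smul_eq heq, hf, psi_zero, add_zero, ← add_assoc]
    using stmt6_general G X V m f
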